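/- Assume K is a nonempty closed convex proper subset of ℝⁿ (there exists y ∈ ℝⁿ with y ∉ K), and assume the probability space admits measurable sets of arbitrarily small positive measure (for every ε > 0 there exists A ∈ 𝓕 with 0 < P(A) < ε). Then the pointwise-constrained set U_K = {ξ ∈ L²(Ω, 𝓕, P; ℝⁿ) : ξ ∈ K a.s.} has empty interior in the Banach space L²(Ω, 𝓕, P; ℝⁿ): near every ξ ∈ U_K there are ξ′ ∈ L² arbitrarily close in L²-norm taking values outside K with positive probability. (Paper's Proposition 4.7: U_K admits no (relative) interior point.) -/

import Mathlib

open MeasureTheory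
open scoped ENNReal

/-- Paper's Proposition 4.7: if `K` is a nonempty closed convex proper subset of `ℝⁿ` and
the probability space admits measurable sets of arbitrarily small positive measure, then
the pointwise-constrained set `U_K ⊆ L²` has empty interior. -/
theorem pointwise_constraint_set_interior_empty
    {Ω : Type*} [MeasurableSpace Ω] (μ : Measure Ω) [IsProbabilityMeasure μ]
    (hsmall : ∀ ε : ℝ, 0 < ε → ∃ A : Set Ω,
      MeasurableSet A ∧ 0 < μ A ∧ μ A < ENNReal.ofReal ε)
    (n : ℕ) (hn : 1 ≤ n)
    (K : Set (EuclideanSpace ℝ (Fin n))) (hKne : K.Nonempty)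
    (hKcl : IsClosed K) (hKconv : Convex ℝ K)
    (hKproper : ∃ y : EuclideanSpace ℝ (Fin n), y ∉ K) :
    interior {f : Lp (EuclideanSpace ℝ (Fin n)) 2 μ | ∀ᵐ ω ∂μ, f ω ∈ K} = ∅ := by
  obtain ⟨y, hy⟩ := hKproper
  rw [Set.eq_empty_iff_forall_notMem]
  intro f hf
  rw [mem_interior_iff_mem_nhds, Metric.mem_nhds_iff] at hf
  obtain ⟨r, hr, hball⟩ := hf
  have hh : MemLp (fun ω => y - f ω) 2 μ := (memLp_const y).sub (Lp.memLp f)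
  obtain ⟨δ, hδ, hδs⟩ := hh.eLpNorm_indicator_le (by norm_num) (by norm_num) (half_pos hr)
  obtain ⟨A, hA, hpos, hlt⟩ := hsmall δ hδ
  have hg := hh.indicator hA
  have hmem : f + hg.toLp _ ∈ Metric.ball f r := by
    rw [mem_ball_iff_norm, add_sub_cancel_left, Lp.norm_toLp]
    have h1 := ENNReal.toReal_mono ENNReal.ofReal_ne_top (hδs A hA hlt.le)
    rw [ENNReal.toReal_ofReal (half_pos hr).le] at h1
    linarith
  have hK : ∀ᵐ ω ∂μ, (f + hg.toLp _ : Lp (EuclideanSpace ℝ (Fin n)) 2 μ) ω ∈ K := hball hmem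
  have hnot : ∀ᵐ ω ∂μ, ω ∉ A := by
    filter_upwards [hK, Lp.coeFn_add f (hg.toLp _), hg.coeFn_toLp] with ω h1 h2 h3 hω
    rw [h2, Pi.add_apply, h3, Set.indicator_of_mem hω, add_sub_cancel] at h1
    exact hy h1
  exact hpos.ne' (measure_eq_zero_iff_ae_notMem.mpr hnot)
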